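/- (Cho–van Willigenburg star formula) For every n ≥ 0, the chromatic symmetric function of the star graph S_{n+1} on n + 1 vertices satisfies X_{S_{n+1}} = Σ_{i=0}^{n} (−1)^i · binom(n, i) · p_{(i+1, 1^{n−i})}, where (i+1, 1^{n−i}) denotes the partition with one part equal to i + 1 and n − i parts equal to 1. -/

import Mathlib

open scoped Classical

noncomputable section

/-- The power sum `p_n = Σ_{i ∈ ℕ} x_i^n` in `MvPowerSeries ℕ ℚ` (intended for `n ≥ 1`). -/
def psum (n : ℕ) : MvPowerSeries ℕ ℚ :=
  fun d => if ∃ i : ℕ, d = Finsupp.single i n then 1 else 0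

/-- `p_λ = p_{λ_1} ⋯ p_{λ_ℓ}` for a partition `λ = (λ_1, …, λ_ℓ)`. -/
def psumProd (l : List ℕ) : MvPowerSeries ℕ ℚ := (l.map psum).prod

/-- A proper coloring of a simple graph: adjacent vertices receive distinct colors. -/
def Proper {V : Type} (G : SimpleGraph V) (κ : V → ℕ) : Prop :=
  ∀ u v, G.Adj u v → κ u ≠ κ v

/-- The chromatic symmetric function `X_G = Σ_κ Π_{v ∈ V} x_{κ(v)}` of a finite simple
graph `G`, as an element of `MvPowerSeries ℕ ℚ`: the coefficient of the monomial `d` is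
the (finite) number of proper colorings `κ : V → ℕ` using each color `c` exactly `d c`
times. -/
def XG {V : Type} [Fintype V] [DecidableEq V] (G : SimpleGraph V) : MvPowerSeries ℕ ℚ :=
  fun d =>
    (Nat.card {κ : V → ℕ // Proper G κ ∧
      ∀ c : ℕ, (Finset.univ.filter (fun v => κ v = c)).card = d c} : ℚ)

/-- The star graph `S_{n+1}`: the simple graph on the `n + 1` vertices `Fin (n+1)`
whose edges are `{0, v}` for each vertex `v ≠ 0`. -/
def starGraph (n : ℕ) : SimpleGraph (Fin (n + 1)) :=
  SimpleGraph.fromRel (fun u _ => u = 0)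

/-!
A power series is determined by what remains of it when all but finitely many variables are set to
zero, and this specialization is a ring homomorphism. It sends `X_G` to the finite sum of
`∏ v, x_{κ v}` over the proper colorings `κ` with the remaining colors. A proper coloring of a star
is a color `c` for the center and arbitrary colors `b ≠ c` for the `n` leaves, so this sum is
`∑ c, x_c (∑ b ≠ c, x_b)ⁿ = ∑ c, x_c (p₁ - x_c)ⁿ`, and the binomial theorem finishes the proof.
-/

theorem coeff_psum (k : ℕ) (d : ℕ →₀ ℕ) :
    MvPowerSeries.coeff d (psum k) = if ∃ i, d = Finsupp.single i k then 1 else 0 :=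
  rfl

section Truncation

variable {σ : Type*}

theorem eq_of_forall_killCompl_eq {R : Type*} [CommSemiring R] {f g : MvPowerSeries σ R}
    (h : ∀ s : Finset σ, MvPowerSeries.killCompl (.subtype (· ∈ s)) f =
      MvPowerSeries.killCompl (.subtype (· ∈ s)) g) : f = g := by
  ext d
  have hd : (d.subtypeDomain (· ∈ d.support)).embDomain (.subtype (· ∈ d.support)) = d := by
    rw [← Finsupp.extendDomain_eq_embDomain_subtype, Finsupp.extendDomain_subtypeDomain]
    exact fun _ => id
  rw [← hd, ← MvPowerSeries.coeff_killCompl, h, MvPowerSeries.coeff_killCompl]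

variable [Fintype σ] (e : σ ↪ ℕ)

-- For `k = 0` the two sides differ: `psum 0 = 1`, whereas `∑ i, X i ^ 0` counts the variables.
theorem killCompl_psum {k : ℕ} (hk : k ≠ 0) :
    MvPowerSeries.killCompl e (psum k) = ∑ i, MvPowerSeries.X i ^ k := by
  ext d
  have single_inj (i j : σ) : Finsupp.single i k = Finsupp.single j k ↔ i = j :=
    (Finsupp.single_left_injective hk).eq_iff
  have embDomain_eq_single_iff : (∃ a, d.embDomain e = Finsupp.single a k) ↔
      ∃ i, d = Finsupp.single i k :=
    ⟨fun ⟨a, ha⟩ => (Finsupp.single_of_embDomain_single d e a k hk ha).imp fun _ => And.left,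
      fun ⟨i, hi⟩ => ⟨e i, by rw [hi, Finsupp.embDomain_single]⟩⟩
  rw [MvPowerSeries.coeff_killCompl, coeff_psum, embDomain_eq_single_iff, map_sum]
  simp only [MvPowerSeries.coeff_X_pow]
  by_cases hd : ∃ i, d = Finsupp.single i k
  · obtain ⟨i, rfl⟩ := hd
    simp [single_inj]
  · rw [if_neg hd, Finset.sum_eq_zero fun i _ => if_neg fun h => hd ⟨i, h⟩]

theorem killCompl_psumProd {l : List ℕ} (hl : 0 ∉ l) :
    MvPowerSeries.killCompl e (psumProd l) =
      (l.map fun k => ∑ i, MvPowerSeries.X i ^ k).prod := by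
  rw [psumProd, map_list_prod, List.map_map]
  congr 1
  exact List.map_congr_left fun k hk => killCompl_psum e (ne_of_mem_of_not_mem hk hl)

end Truncation

section Coloring

variable {V : Type*} [Fintype V] {σ τ : Type*}

/-- The content of a coloring `κ`: the exponent of the monomial `∏ v, x_{κ v}`, which records how
many times each color is used. -/
def colorContent (κ : V → σ) : σ →₀ ℕ := ∑ v, Finsupp.single (κ v) 1

theorem colorContent_apply [DecidableEq σ] (κ : V → σ) (c : σ) :
    colorContent κ c = (Finset.univ.filter fun v => κ v = c).card := by
  simp only [colorContent, Finsupp.finsetSum_apply, Finsupp.single_apply, Finset.card_filter]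

theorem colorContent_comp_embedding (e : σ ↪ τ) (κ : V → σ) :
    colorContent (e ∘ κ) = (colorContent κ).embDomain e := by
  simp only [colorContent, Function.comp_apply, Finsupp.embDomain_eq_mapDomain,
    Finsupp.mapDomain_finsetSum, Finsupp.mapDomain_single]

theorem prod_X_eq_monomial_colorContent {R : Type*} [CommSemiring R] (κ : V → σ) :
    ∏ v, (MvPowerSeries.X (κ v) : MvPowerSeries σ R) =
      MvPowerSeries.monomial (colorContent κ) 1 := by
  simp only [MvPowerSeries.X, MvPowerSeries.prod_monomial, Finset.prod_const_one, colorContent]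

theorem mem_range_of_colorContent_eq_embDomain {e : σ ↪ τ} {κ : V → τ} {d : σ →₀ ℕ}
    (h : colorContent κ = d.embDomain e) (v : V) : κ v ∈ Set.range e := by
  by_contra hv
  have unused : colorContent κ (κ v) = 0 := by rw [h, Finsupp.embDomain_of_notMem_range _ _ _ hv]
  rw [colorContent_apply, Finset.card_eq_zero] at unused
  exact Finset.filter_eq_empty_iff.mp unused (Finset.mem_univ v) rfl

/-- Colorings of content `d` correspond, under an embedding `e` of the colors, to colorings of
content `d.embDomain e`. -/
def coloringContentEquiv (G : SimpleGraph V) (e : σ ↪ τ) (d : σ →₀ ℕ) :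
    {κ : G.Coloring σ // colorContent κ = d} ≃
      {κ : G.Coloring τ // colorContent κ = d.embDomain e} :=
  Equiv.ofBijective
    (Subtype.map (G.recolorOfEmbedding e) fun κ hκ =>
      (colorContent_comp_embedding e κ).trans (congrArg _ hκ))
    ⟨Subtype.map_injective _ (G.recolorOfEmbedding e).injective, fun ⟨κ, hκ⟩ => by
      choose κ' hκ' using mem_range_of_colorContent_eq_embDomain hκ
      refine ⟨⟨.mk κ' fun {u v} huv huv' => κ.valid huv ?_, ?_⟩, ?_⟩
      · rw [← hκ', ← hκ', huv']
      · apply Finsupp.embDomain_injective e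
        rw [← hκ, ← colorContent_comp_embedding]
        exact congrArg colorContent (funext hκ')
      · exact Subtype.ext (RelHom.ext hκ')⟩

end Coloring

section ChromaticSymmetricFunction

variable {V : Type} [Fintype V] [DecidableEq V]

theorem coeff_XG (G : SimpleGraph V) (d : ℕ →₀ ℕ) :
    MvPowerSeries.coeff d (XG G) = Nat.card {κ : G.Coloring ℕ // colorContent κ = d} := by
  let toColoring : {κ : V → ℕ // Proper G κ ∧ ∀ c, (Finset.univ.filter (κ · = c)).card = d c} ≃
      {κ : G.Coloring ℕ // colorContent κ = d} :=
    { toFun κ := ⟨.mk κ.1 (κ.2.1 _ _), Finsupp.ext fun c =>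
        (colorContent_apply κ.1 c).trans (κ.2.2 c)⟩
      invFun κ := ⟨κ.1, fun _ _ => κ.1.valid, fun c =>
        (colorContent_apply κ.1 c).symm.trans (DFunLike.congr_fun κ.2 c)⟩
      left_inv _ := rfl
      right_inv _ := rfl }
  exact congrArg Nat.cast (Nat.card_congr toColoring)

theorem killCompl_XG (G : SimpleGraph V) {σ : Type*} [Fintype σ] (e : σ ↪ ℕ) :
    MvPowerSeries.killCompl e (XG G) = ∑ κ : G.Coloring σ, ∏ v, MvPowerSeries.X (κ v) := by
  ext d
  rw [MvPowerSeries.coeff_killCompl, coeff_XG, ← Nat.card_congr (coloringContentEquiv G e d),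
    Nat.card_eq_fintype_card, Fintype.card_subtype]
  simp only [prod_X_eq_monomial_colorContent, map_sum, MvPowerSeries.coeff_monomial,
    Finset.sum_boole, eq_comm]

end ChromaticSymmetricFunction

section Star

variable {V σ : Type*} [DecidableEq σ]

/-- A proper coloring of a star amounts to a color `c` for the center together with arbitrary
colors other than `c` for the leaves. -/
def starColoringEquiv [DecidableEq V] (r : V) :
    (SimpleGraph.starGraph r).Coloring σ ≃ Σ c : σ, {v // v ≠ r} → {b // b ≠ c} where
  toFun κ := ⟨κ r, fun v => ⟨κ v, κ.valid (by simpa using v.2)⟩⟩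
  invFun f := .mk (fun v => if h : v = r then f.1 else f.2 ⟨v, h⟩) fun {u v} huv => by
    rw [SimpleGraph.starGraph_adj] at huv
    obtain ⟨huv, rfl | rfl⟩ := huv
    · simpa [huv.symm] using (f.2 ⟨v, huv.symm⟩).2.symm
    · simpa [huv] using (f.2 ⟨u, huv⟩).2
  left_inv κ := RelHom.ext fun v => by
    change (if v = r then κ r else κ v) = κ v
    split_ifs with h
    · rw [h]
    · rfl
  right_inv f := by
    have sigma_ext : ∀ f f' : Σ c : σ, {v // v ≠ r} → {b // b ≠ c},
        f.1 = f'.1 → (∀ v, (f.2 v : σ) = f'.2 v) → f = f' := by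
      rintro ⟨c, g⟩ ⟨_, g'⟩ rfl h
      exact congrArg (Sigma.mk c) (funext fun v => Subtype.ext (h v))
    exact sigma_ext _ _ (dif_pos rfl) fun v => dif_neg v.2

theorem sum_starGraph_coloring_prod [DecidableEq V] [Fintype V] [Fintype σ] {R : Type*}
    [CommSemiring R] (r : V) (x : σ → R) :
    ∑ κ : (SimpleGraph.starGraph r).Coloring σ, ∏ v, x (κ v) =
      ∑ c, x c * (∑ b : {b // b ≠ c}, x b) ^ Fintype.card {v // v ≠ r} := by
  have prod_eq (κ : (SimpleGraph.starGraph r).Coloring σ) :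
      ∏ v, x (κ v) = x (starColoringEquiv r κ).1 * ∏ v, x ((starColoringEquiv r κ).2 v) :=
    Fintype.prod_eq_mul_prod_subtype_ne (fun v => x (κ v)) r
  simp only [prod_eq]
  rw [(starColoringEquiv r).sum_comp fun f => x f.1 * ∏ v, x (f.2 v), Fintype.sum_sigma]
  refine Finset.sum_congr rfl fun c _ => ?_
  dsimp only
  rw [← Finset.mul_sum, ← Fintype.prod_sum fun (_ : {v // v ≠ r}) (b : {b // b ≠ c}) => x b,
    Finset.prod_const, Finset.card_univ]

theorem sum_mul_sum_ne_pow [Fintype σ] {R : Type*} [CommRing R] (x : σ → R) (n : ℕ) :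
    ∑ c, x c * (∑ b : {b // b ≠ c}, x b) ^ n =
      ∑ i ∈ Finset.range (n + 1),
        (-1) ^ i * n.choose i * ((∑ c, x c ^ (i + 1)) * (∑ c, x c) ^ (n - i)) := by
  have sum_ne (c : σ) : ∑ b : {b // b ≠ c}, x b = -x c + ∑ b, x b := by
    rw [Fintype.sum_eq_add_sum_subtype_ne x c, neg_add_cancel_left]
  simp only [sum_ne, add_pow, Finset.mul_sum, Finset.sum_mul]
  rw [Finset.sum_comm]
  refine Finset.sum_congr rfl fun i _ => Finset.sum_congr rfl fun c _ => ?_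
  rw [neg_pow]
  ring

end Star

theorem XG_star_general {V : Type} [Fintype V] [DecidableEq V] (r : V) {n : ℕ}
    (hV : Fintype.card V = n + 1) :
    XG (SimpleGraph.starGraph r) =
      ∑ i ∈ Finset.range (n + 1),
        ((-1 : ℚ) ^ i * (n.choose i : ℚ)) •
          psumProd ((i + 1) :: List.replicate (n - i) 1) := by
  have card_leaves : Fintype.card {v // v ≠ r} = n := by
    rw [Fintype.card_subtype_compl, Fintype.card_subtype_eq, hV, Nat.add_sub_cancel]
  refine eq_of_forall_killCompl_eq fun s => ?_
  rw [killCompl_XG, sum_starGraph_coloring_prod, card_leaves, sum_mul_sum_ne_pow, map_sum]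
  refine Finset.sum_congr rfl fun i _ => ?_
  rw [map_smul, killCompl_psumProd _ (by simp), Algebra.smul_def]
  simp

/-- Cho–van Willigenburg star formula.  For every `n ≥ 0`, the
chromatic symmetric function of the star graph on `n + 1` vertices satisfies
`X_{S_{n+1}} = Σ_{i=0}^{n} (−1)^i (n choose i) p_{(i+1, 1^{n−i})}`, where
`(i+1, 1^{n−i})` is the partition with one part equal to `i + 1` and `n − i` parts
equal to `1`. -/
theorem XG_star (n : ℕ) :
    XG (starGraph n) =
      ∑ i ∈ Finset.range (n + 1),
        ((-1 : ℚ) ^ i * (n.choose i : ℚ)) •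
          psumProd ((i + 1) :: List.replicate (n - i) 1) :=
  XG_star_general (0 : Fin (n + 1)) (Fintype.card_fin _)

end
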